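/- arXiv:2604.06513 — 4 statements merged into one kernel-verified Lean document; each statement's English description precedes it below -/
import Mathlib

section
/- Let V be a nonempty finite type and let A be a V×V matrix over ℂ all of whose entries are 0 or 1, such that for all i, j it is not the case that both A i j = 1 and A j i = 1 (in particular every diagonal entry of A is 0, i.e. the associated digraph has no loops and no pair of oppositely oriented arcs). Suppose A is n-regular for some natural number n > 0, i.e. for every i the row sum ∑_j A i j equals n. Then A has at least one non-real eigenvalue: there exists λ in spectrum ℂ A with Im(λ) ≠ 0. -/
open scoped Classical

/-!
If every eigenvalue of `A` is real, then every eigenvalue of `A²` is a nonnegative real, so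
`tr A²`, their sum with multiplicity, is at least `z²` for each eigenvalue `z` of `A`. A constant
row sum `c ≠ 0` is a nonzero eigenvalue, which would force `tr A² > 0`. But
`tr A² = ∑ᵢⱼ Aᵢⱼ Aⱼᵢ` vanishes, since no two vertices are joined by arcs in both directions.
-/

open scoped ComplexOrder Matrix

section

variable {V : Type*} [Fintype V]

theorem trace_mul_self_eq_zero_of_apply_mul_apply_swap_eq_zero {R : Type*}
    [NonUnitalNonAssocSemiring R] {A : Matrix V V R} (h : ∀ i j, A i j * A j i = 0) :
    (A * A).trace = 0 := by
  simp only [Matrix.trace, Matrix.diag_apply, Matrix.mul_apply, h, Finset.sum_const_zero]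

variable [DecidableEq V]

theorem mem_spectrum_of_forall_row_sum_eq {R : Type*} [CommRing R] [Nontrivial R] [Nonempty V]
    {A : Matrix V V R} {c : R} (h : ∀ i, ∑ j, A i j = c) : c ∈ spectrum R A := by
  intro hunit
  have hA : A *ᵥ 1 = c • 1 := by
    ext i
    simp [Matrix.mulVec, dotProduct, h]
  have hker : (algebraMap R (Matrix V V R) c - A) *ᵥ 1 = 0 := by
    rw [Algebra.algebraMap_eq_smul_one, Matrix.sub_mulVec, Matrix.smul_mulVec, Matrix.one_mulVec,
      hA, sub_self]
  have hone : (1 : V → R) = 0 :=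
    Matrix.mulVec_injective_of_isUnit hunit (hker.trans (Matrix.mulVec_zero _).symm)
  exact one_ne_zero hone

theorem le_trace_of_mem_spectrum {K : Type*} [Field K] [IsAlgClosed K] [PartialOrder K]
    [IsOrderedAddMonoid K] {A : Matrix V V K} (hnonneg : ∀ w ∈ spectrum K A, 0 ≤ w) {z : K}
    (hz : z ∈ spectrum K A) : z ≤ A.trace := by
  have mem_roots_iff (w : K) : w ∈ A.charpoly.roots ↔ w ∈ spectrum K A := by
    rw [Polynomial.mem_roots A.charpoly_monic.ne_zero, Matrix.mem_spectrum_iff_isRoot_charpoly]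
  rw [Matrix.trace_eq_sum_roots_charpoly]
  exact Multiset.single_le_sum (fun w hw => hnonneg w ((mem_roots_iff w).1 hw)) z
    ((mem_roots_iff z).2 hz)

theorem trace_mul_self_pos_of_spectrum_real {A : Matrix V V ℂ}
    (hreal : ∀ w ∈ spectrum ℂ A, w.im = 0) {z : ℂ} (hz : z ∈ spectrum ℂ A) (hz0 : z ≠ 0) :
    0 < (A * A).trace := by
  have sq_nonneg_of_mem (w : ℂ) (hw : w ∈ spectrum ℂ A) : 0 ≤ w ^ 2 := by
    lift w to ℝ using hreal w hw
    exact_mod_cast sq_nonneg w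
  have spectrum_sq_nonneg : ∀ u ∈ spectrum ℂ (A ^ 2), 0 ≤ u := by
    rw [spectrum.map_pow_of_pos A two_pos]
    rintro _ ⟨w, hw, rfl⟩
    exact sq_nonneg_of_mem w hw
  calc
    0 < z ^ 2 := (sq_nonneg_of_mem z hz).lt_of_ne (pow_ne_zero 2 hz0).symm
    _ ≤ (A ^ 2).trace := le_trace_of_mem_spectrum spectrum_sq_nonneg (spectrum.pow_mem_pow A 2 hz)
    _ = (A * A).trace := by rw [sq]

theorem digraph_regular_no_bidirected_has_nonreal_eigenvalue_general [Nonempty V]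
    {A : Matrix V V ℂ} (hasym : ∀ i j, A i j * A j i = 0) {c : ℂ} (hc : c ≠ 0)
    (hreg : ∀ i, ∑ j, A i j = c) : ∃ z ∈ spectrum ℂ A, z.im ≠ 0 := by
  by_contra! hreal
  exact (trace_mul_self_pos_of_spectrum_real hreal (mem_spectrum_of_forall_row_sum_eq hreg) hc).ne'
    (trace_mul_self_eq_zero_of_apply_mul_apply_swap_eq_zero hasym)

end

theorem digraph_regular_no_bidirected_has_nonreal_eigenvalue
    {V : Type*} [Fintype V] [DecidableEq V] [Nonempty V]
    (A : Matrix V V ℂ)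
    (h01 : ∀ i j, A i j = 0 ∨ A i j = 1)
    (hasym : ∀ i j, ¬ (A i j = 1 ∧ A j i = 1))
    (n : ℕ) (hn : 0 < n)
    (hreg : ∀ i, ∑ j, A i j = (n : ℂ)) :
    ∃ z ∈ spectrum ℂ A, z.im ≠ 0 := by
  have no_two_cycle (i j : V) : A i j * A j i = 0 := by grind
  exact digraph_regular_no_bidirected_has_nonreal_eigenvalue_general no_two_cycle
    (Nat.cast_ne_zero.2 hn.ne') hreg
end

section
/- Let q = p^m be a prime power and k a positive divisor of q−1. Let A be the adjacency matrix of the generalized Paley graph Γ(k,q). Then every eigenvalue of A is real (i.e. for all λ ∈ spectrum ℂ A, Im(λ) = 0) if and only if −1 ∈ R_k, that is, if and only if Γ(k,q) is undirected. Equivalently, Γ(k,q) is directed if and only if A has at least one non-real eigenvalue. -/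
open scoped Classical

/-!
A Cayley digraph on a finite abelian group has a circulant adjacency matrix, and circulant matrices
over an abelian group commute. As the conjugate transpose of a circulant matrix is circulant, the
adjacency matrix is normal, so by the spectral theorem its spectrum is real exactly when it is
Hermitian, that is, when the connection set `S` satisfies `-S = S`. For a multiplicatively closed
`S ∋ 1` in a ring this symmetry amounts to `-1 ∈ S`.
-/

open Matrix
open scoped Pointwise

theorem isSelfAdjoint_iff_forall_mem_spectrum_im_eq_zero {A : Type*} [TopologicalSpace A] [Ring A]
    [StarRing A] [Algebra ℂ A] [ContinuousFunctionalCalculus ℂ A IsStarNormal]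
    (a : A) [IsStarNormal a] : IsSelfAdjoint a ↔ ∀ z ∈ spectrum ℂ a, z.im = 0 := by
  have restricts_iff : SpectrumRestricts a Complex.reCLM ↔ ∀ z ∈ spectrum ℂ a, z.im = 0 := by
    simp only [spectrumRestricts_iff, Set.RightInvOn, Set.LeftInvOn, Complex.coe_algebraMap,
      Complex.reCLM_apply, Function.LeftInverse, Complex.ofReal_re, implies_true, and_true,
      ← Complex.conj_eq_iff_re, Complex.conj_eq_iff_im]
  rw [← restricts_iff]
  exact ⟨fun ha ↦ ha.spectrumRestricts, fun ha ↦ ha.isSelfAdjoint⟩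

open scoped Matrix.Norms.L2Operator in
theorem isHermitian_iff_forall_mem_spectrum_im_eq_zero {n : Type*} [Fintype n] [DecidableEq n]
    (A : Matrix n n ℂ) [IsStarNormal A] :
    A.IsHermitian ↔ ∀ z ∈ spectrum ℂ A, z.im = 0 :=
  isSelfAdjoint_iff_forall_mem_spectrum_im_eq_zero A

theorem isStarNormal_circulant {G α : Type*} [AddCommGroup G] [Fintype G]
    [NonUnitalCommSemiring α] [StarRing α] (v : G → α) : IsStarNormal (circulant v) where
  star_comm_self := by
    rw [star_eq_conjTranspose, conjTranspose_circulant]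
    exact circulant_mul_comm _ _

section CayleyMatrix

variable {G : Type*} (α : Type*)

/-- The adjacency matrix, with entries in `α`, of the Cayley digraph on `G` with connection set
`S`: there is an arc from `x` to `y` iff `y - x ∈ S`. -/
noncomputable def cayleyMatrix [Sub G] [Zero α] [One α] (S : Set G) : Matrix G G α :=
  of fun x y ↦ S.indicator 1 (y - x)

theorem cayleyMatrix_eq_circulant [AddGroup G] [Zero α] [One α] (S : Set G) :
    cayleyMatrix α S = circulant ((-S).indicator 1) := by
  ext x y
  simp [cayleyMatrix, Set.indicator_apply]

theorem cayleyMatrix_injective [AddGroup G] [MulZeroOneClass α] [Nontrivial α] :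
    Function.Injective (cayleyMatrix α : Set G → Matrix G G α) := fun S T hST ↦ by
  rw [cayleyMatrix_eq_circulant, cayleyMatrix_eq_circulant, circulant_inj] at hST
  exact neg_injective (Set.indicator_one_inj α hST)

theorem conjTranspose_cayleyMatrix [AddGroup G] [NonAssocSemiring α] [StarRing α] (S : Set G) :
    (cayleyMatrix α S)ᴴ = cayleyMatrix α (-S) := by
  ext x y
  simp [cayleyMatrix, Set.indicator_apply, apply_ite (star : α → α)]

theorem isHermitian_cayleyMatrix_iff [AddGroup G] [NonAssocSemiring α] [StarRing α] [Nontrivial α]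
    {S : Set G} : (cayleyMatrix α S).IsHermitian ↔ -S = S := by
  rw [IsHermitian, conjTranspose_cayleyMatrix, (cayleyMatrix_injective α).eq_iff]

instance isStarNormal_cayleyMatrix [AddCommGroup G] [Fintype G] [CommSemiring α] [StarRing α]
    (S : Set G) : IsStarNormal (cayleyMatrix α S) :=
  cayleyMatrix_eq_circulant α S ▸ isStarNormal_circulant _

theorem forall_mem_spectrum_cayleyMatrix_im_eq_zero_iff [AddCommGroup G] [Fintype G] [DecidableEq G]
    (S : Set G) : (∀ z ∈ spectrum ℂ (cayleyMatrix ℂ S), z.im = 0) ↔ -S = S := by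
  rw [← isHermitian_iff_forall_mem_spectrum_im_eq_zero, isHermitian_cayleyMatrix_iff]

end CayleyMatrix

theorem neg_coe_submonoid_eq_self_iff {M : Type*} [MulOneClass M] [HasDistribNeg M]
    (S : Submonoid M) : -(S : Set M) = S ↔ -1 ∈ S := by
  constructor
  · intro hS
    rw [← SetLike.mem_coe, ← hS, Set.neg_mem_neg]
    exact S.one_mem
  · intro hS
    have neg_mem {x : M} (hx : x ∈ S) : -x ∈ S := neg_one_mul x ▸ S.mul_mem hS hx
    ext x
    exact ⟨fun hx ↦ neg_neg x ▸ neg_mem hx, neg_mem⟩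

/-- The submonoid `R_k` of `k`-th powers of the non-zero-divisors of `M`, which are the nonzero
elements when `M` is a field. -/
def nonzeroPowers (M : Type*) [CommMonoidWithZero M] (k : ℕ) : Submonoid M :=
  (nonZeroDivisors M).map (powMonoidHom k)

theorem mem_nonzeroPowers_iff {M : Type*} [CommMonoidWithZero M] [NoZeroDivisors M] [Nontrivial M]
    {k : ℕ} {x : M} : x ∈ nonzeroPowers M k ↔ ∃ z : M, z ≠ 0 ∧ z ^ k = x := by
  simp [nonzeroPowers, Submonoid.mem_map]

theorem gpGraph_real_spectrum_iff_undirected_general {R : Type*} [NonAssocRing R] [Fintype R]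
    [DecidableEq R] (S : Submonoid R) :
    (∀ z ∈ spectrum ℂ (cayleyMatrix ℂ (S : Set R)), z.im = 0) ↔ -1 ∈ S := by
  rw [forall_mem_spectrum_cayleyMatrix_im_eq_zero_iff, neg_coe_submonoid_eq_self_iff]

theorem gpGraph_real_spectrum_iff_undirected
    (p m k : ℕ) (hp : p.Prime) (hm : 1 ≤ m)
    (F : Type*) [Field F] [Fintype F] [DecidableEq F]
    (hF : Fintype.card F = p ^ m)
    (hk : 0 < k) (hkdvd : k ∣ p ^ m - 1)
    (A : Matrix F F ℂ)
    (hA : ∀ x y : F, A x y = if ∃ z : F, z ≠ 0 ∧ z ^ k = y - x then 1 else 0) :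
    (∀ z ∈ spectrum ℂ A, z.im = 0) ↔ (∃ z : F, z ≠ 0 ∧ z ^ k = -1) := by
  obtain rfl : A = cayleyMatrix ℂ (nonzeroPowers F k : Set F) := by
    ext x y
    simp [hA, cayleyMatrix, Set.indicator_apply, mem_nonzeroPowers_iff]
  rw [gpGraph_real_spectrum_iff_undirected_general, mem_nonzeroPowers_iff]
end

section
/- Let q = p^m with p prime and m ≥ 1, and k a positive divisor of q−1. For a natural number s and an exponent j, say that j is s-representable if every a ∈ F_q can be written a = x₁^j + ⋯ + x_s^j with x_i ∈ F_q, and say that k is weakly s-representable if every a ∈ F_q can be written a = ε₁·x₁^k + ⋯ + ε_s·x_s^k with x_i ∈ F_q and each ε_i ∈ {1, −1}. Then: (i) there exists s such that k is weakly s-representable if and only if there exists s such that k is s-representable; (ii) if −1 ∈ R_k, then for every s, k is weakly s-representable iff k is s-representable (so w(k,q) = g(k,q)); (iii) if q is odd and −1 ∉ R_k (so k is even), then for every s, k is weakly s-representable iff k/2 is s-representable (so w(k,q) = g(k/2,q)). -/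
/-!
Write `P k` for the set of `k`-th powers in `F`, including `0`, so that the weak problem asks for
sums of elements of `P k ∪ -P k`. In a finite group `-x` is a natural multiple of `x`, so signs only
cost more summands. If `-1 ∈ P k` then `P k = -P k` and signs cost nothing. If `-1 ∉ P k` then
`k = 2 * h`, the divisibility `k ∣ q - 1` yields `w` with `w ^ h = -1`, and `w` is not a square,
since `w = r ^ 2` would give `r ^ k = -1`. Hence for every `y` one of `y` and `y * w` is a square,
so one of `y ^ h` and `-y ^ h` lies in `P k`, that is, `P k ∪ -P k = P h`.
-/

section AdditiveBasis

open scoped Pointwise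

/-- `S` is an additive basis of order `s`: the `s`-fold sumset `S + ⋯ + S` is the whole monoid.
Exactly `s` summands are used, which amounts to at most `s` when `0 ∈ S`. -/
def IsAdditiveBasis {A : Type*} [AddMonoid A] (S : Set A) (s : ℕ) : Prop :=
  s • S = Set.univ

theorem isAdditiveBasis_iff_forall_exists_sum {A : Type*} [AddCommMonoid A] {S : Set A} {s : ℕ} :
    IsAdditiveBasis S s ↔ ∀ a, ∃ v : Fin s → A, (∀ i, v i ∈ S) ∧ ∑ i, v i = a := by
  simp only [IsAdditiveBasis, Set.eq_univ_iff_forall, Set.mem_nsmul_iff_sum]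

theorem IsAdditiveBasis.of_subset_nsmul {A : Type*} [AddMonoid A] {S T : Set A} {s n : ℕ}
    (hS : IsAdditiveBasis S s) (hST : S ⊆ n • T) : IsAdditiveBasis T (n * s) := by
  refine Set.eq_univ_of_univ_subset ?_
  calc Set.univ = s • S := hS.symm
    _ ⊆ s • n • T := Set.nsmul_subset_nsmul_left hST
    _ = (n * s) • T := (mul_nsmul T n s).symm

theorem IsAdditiveBasis.mono {A : Type*} [AddMonoid A] {S T : Set A} {s : ℕ}
    (hS : IsAdditiveBasis S s) (hST : S ⊆ T) : IsAdditiveBasis T s :=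
  Set.eq_univ_of_univ_subset (hS.symm.trans_subset (Set.nsmul_subset_nsmul_left hST))

theorem neg_subset_card_nsmul {A : Type*} [AddGroup A] [Finite A] {S : Set A} (h0 : 0 ∈ S) :
    -S ⊆ Nat.card A • S := by
  intro x hx
  have card_sub_one_nsmul : (Nat.card A - 1) • -x = x := by
    rw [sub_nsmul _ Nat.card_pos, card_nsmul_eq_zero', one_nsmul, neg_neg, zero_add]
  exact Set.nsmul_subset_nsmul_right h0 (Nat.sub_le _ 1)
    (card_sub_one_nsmul ▸ Set.nsmul_mem_nsmul hx)

theorem exists_isAdditiveBasis_union_neg_iff {A : Type*} [AddGroup A] [Finite A] {S : Set A}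
    (h0 : 0 ∈ S) : (∃ s, IsAdditiveBasis (S ∪ -S) s) ↔ ∃ s, IsAdditiveBasis S s := by
  constructor
  · rintro ⟨s, hs⟩
    have subset_card_nsmul : S ⊆ Nat.card A • S := Set.subset_nsmul h0 Nat.card_pos.ne'
    exact ⟨_, hs.of_subset_nsmul (Set.union_subset subset_card_nsmul (neg_subset_card_nsmul h0))⟩
  · rintro ⟨s, hs⟩
    exact ⟨s, hs.mono Set.subset_union_left⟩

end AdditiveBasis

section Powers

open scoped Pointwise

/-- The set of `k`-th powers. Unlike the paper's `R_k` it contains `0 ^ k`, as the summands `x ^ k`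
in Waring's problem may vanish. -/
def kthPowers (M : Type*) [Monoid M] (k : ℕ) : Set M :=
  Set.range fun x : M ↦ x ^ k

/-- The set of all `x ^ k` and `-x ^ k`: the admissible summands in the weak Waring problem. -/
def signedKthPowers (R : Type*) [Ring R] (k : ℕ) : Set R :=
  kthPowers R k ∪ -kthPowers R k

theorem kthPowers_subset_of_dvd (M : Type*) [Monoid M] {j k : ℕ} (hjk : j ∣ k) :
    kthPowers M k ⊆ kthPowers M j := by
  rintro _ ⟨x, rfl⟩
  obtain ⟨n, rfl⟩ := hjk
  exact ⟨x ^ n, (pow_mul' x j n).symm⟩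

theorem mem_signedKthPowers_iff {R : Type*} [Ring R] {k : ℕ} {a : R} :
    a ∈ signedKthPowers R k ↔ ∃ x ε : R, (ε = 1 ∨ ε = -1) ∧ ε * x ^ k = a := by
  simp only [signedKthPowers, kthPowers, Set.mem_union, Set.mem_neg, Set.mem_range, or_and_right,
    exists_or, exists_eq_left, one_mul, neg_one_mul, neg_eq_iff_eq_neg]

theorem isAdditiveBasis_kthPowers_iff {R : Type*} [Semiring R] {k s : ℕ} :
    IsAdditiveBasis (kthPowers R k) s ↔ ∀ a : R, ∃ x : Fin s → R, a = ∑ i, x i ^ k := by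
  simp only [isAdditiveBasis_iff_forall_exists_sum, kthPowers, Set.mem_range]
  refine forall_congr' fun a ↦ ⟨?_, ?_⟩
  · rintro ⟨v, hv, rfl⟩
    choose x hx using hv
    exact ⟨x, Finset.sum_congr rfl fun i _ ↦ (hx i).symm⟩
  · rintro ⟨x, rfl⟩
    exact ⟨fun i ↦ x i ^ k, fun i ↦ ⟨x i, rfl⟩, rfl⟩

theorem isAdditiveBasis_signedKthPowers_iff {R : Type*} [Ring R] {k s : ℕ} :
    IsAdditiveBasis (signedKthPowers R k) s ↔ ∀ a : R, ∃ x ε : Fin s → R,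
      (∀ i, ε i = 1 ∨ ε i = -1) ∧ a = ∑ i, ε i * x i ^ k := by
  simp only [isAdditiveBasis_iff_forall_exists_sum, mem_signedKthPowers_iff]
  refine forall_congr' fun a ↦ ⟨?_, ?_⟩
  · rintro ⟨v, hv, rfl⟩
    choose x ε hε hx using hv
    exact ⟨x, ε, hε, Finset.sum_congr rfl fun i _ ↦ (hx i).symm⟩
  · rintro ⟨x, ε, hε, rfl⟩
    exact ⟨fun i ↦ ε i * x i ^ k, fun i ↦ ⟨x i, ε i, hε i, rfl⟩, rfl⟩

theorem zero_mem_kthPowers (M : Type*) [MonoidWithZero M] {k : ℕ} (hk : k ≠ 0) :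
    0 ∈ kthPowers M k :=
  ⟨0, zero_pow hk⟩

theorem neg_one_mem_kthPowers_iff {R : Type*} [Ring R] [Nontrivial R] {k : ℕ} (hk : k ≠ 0) :
    -1 ∈ kthPowers R k ↔ ∃ z : R, z ≠ 0 ∧ z ^ k = -1 := by
  refine ⟨?_, fun ⟨z, _, hz⟩ ↦ ⟨z, hz⟩⟩
  rintro ⟨z, hz : z ^ k = -1⟩
  refine ⟨z, ?_, hz⟩
  rintro rfl
  simp [zero_pow hk] at hz

theorem even_of_neg_one_notMem_kthPowers {R : Type*} [Ring R] {k : ℕ}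
    (hneg : -1 ∉ kthPowers R k) : Even k :=
  Nat.not_odd_iff_even.1 fun hodd ↦ hneg ⟨-1, hodd.neg_one_pow⟩

theorem ringChar_ne_two_of_neg_one_notMem_kthPowers {R : Type*} [Ring R] [Nontrivial R] {k : ℕ}
    (hneg : -1 ∉ kthPowers R k) : ringChar R ≠ 2 :=
  fun hchar ↦ hneg ⟨1, (one_pow k).trans (neg_one_eq_one_iff.2 hchar).symm⟩

theorem neg_kthPowers_subset {R : Type*} [CommRing R] {k : ℕ} (hneg : -1 ∈ kthPowers R k) :
    -kthPowers R k ⊆ kthPowers R k := by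
  obtain ⟨z, hz : z ^ k = -1⟩ := hneg
  rintro a ⟨x, hx : x ^ k = -a⟩
  exact ⟨z * x, by simp only [mul_pow, hz, hx, neg_mul_neg, one_mul]⟩

theorem signedKthPowers_subset_of_dvd {R : Type*} [CommRing R] {j k : ℕ} (hjk : j ∣ k)
    (hneg : -1 ∈ kthPowers R j) : signedKthPowers R k ⊆ kthPowers R j :=
  Set.union_subset (kthPowers_subset_of_dvd R hjk)
    ((Set.neg_subset_neg.2 (kthPowers_subset_of_dvd R hjk)).trans (neg_kthPowers_subset hneg))

theorem signedKthPowers_eq_kthPowers {R : Type*} [CommRing R] {k : ℕ}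
    (hneg : -1 ∈ kthPowers R k) : signedKthPowers R k = kthPowers R k :=
  (signedKthPowers_subset_of_dvd dvd_rfl hneg).antisymm Set.subset_union_left

end Powers

section FiniteField

variable {F : Type*} [Field F]

theorem isSquare_mul_of_not_isSquare [Finite F] {a b : F} (ha : ¬IsSquare a)
    (hb : ¬IsSquare b) : IsSquare (a * b) := by
  classical
  have := Fintype.ofFinite F
  have hab : a * b ≠ 0 := by
    refine mul_ne_zero ?_ ?_
    · rintro rfl
      exact ha .zero
    · rintro rfl
      exact hb .zero
  rw [← quadraticChar_one_iff_isSquare hab, map_mul,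
    quadraticChar_neg_one_iff_not_isSquare.2 ha, quadraticChar_neg_one_iff_not_isSquare.2 hb,
    neg_mul_neg, one_mul]

variable [Fintype F]

theorem neg_one_mem_kthPowers_of_two_mul_dvd {h : ℕ} (hF : ringChar F ≠ 2)
    (hdvd : 2 * h ∣ Fintype.card F - 1) : -1 ∈ kthPowers F h := by
  obtain ⟨n, hn⟩ := hdvd
  obtain ⟨g, hg⟩ := FiniteField.exists_nonsquare hF
  have hg0 : g ≠ 0 := by
    rintro rfl
    exact hg .zero
  have half_card : Fintype.card F / 2 = n * h := by
    have card_odd := FiniteField.odd_card_of_char_ne_two hF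
    grind
  have euler : g ^ (Fintype.card F / 2) = -1 :=
    (FiniteField.pow_dichotomy hF hg0).resolve_left
      fun hone ↦ hg ((FiniteField.isSquare_iff hF hg0).2 hone)
  exact ⟨g ^ n, by simp only [← pow_mul, ← half_card, euler]⟩

theorem signedKthPowers_two_mul {h : ℕ} (hdvd : 2 * h ∣ Fintype.card F - 1)
    (hneg : -1 ∉ kthPowers F (2 * h)) : signedKthPowers F (2 * h) = kthPowers F h := by
  have neg_one_mem : -1 ∈ kthPowers F h :=
    neg_one_mem_kthPowers_of_two_mul_dvd (ringChar_ne_two_of_neg_one_notMem_kthPowers hneg) hdvd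
  refine (signedKthPowers_subset_of_dvd (dvd_mul_left h 2) neg_one_mem).antisymm ?_
  obtain ⟨w, hw : w ^ h = -1⟩ := neg_one_mem
  have pow_two_mul (r : F) : r ^ (2 * h) = (r * r) ^ h := by rw [pow_mul, pow_two]
  have w_not_isSquare : ¬IsSquare w := by
    rintro ⟨r, rfl⟩
    exact hneg ⟨r, (pow_two_mul r).trans hw⟩
  rintro _ ⟨y, rfl⟩
  by_cases hy : IsSquare y
  · obtain ⟨r, rfl⟩ := hy
    exact Or.inl ⟨r, pow_two_mul r⟩
  · obtain ⟨r, hr⟩ := isSquare_mul_of_not_isSquare hy w_not_isSquare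
    refine Or.inr ⟨r, ?_⟩
    calc r ^ (2 * h) = (y * w) ^ h := by rw [pow_two_mul, hr]
      _ = -y ^ h := by rw [mul_pow, hw, mul_neg_one]

theorem signedKthPowers_eq_kthPowers_half {k : ℕ} (hdvd : k ∣ Fintype.card F - 1)
    (hneg : -1 ∉ kthPowers F k) : signedKthPowers F k = kthPowers F (k / 2) := by
  obtain ⟨h, rfl⟩ := (even_of_neg_one_notMem_kthPowers hneg).two_dvd
  rw [Nat.mul_div_cancel_left h two_pos, signedKthPowers_two_mul hdvd hneg]

end FiniteField

theorem weak_waring_reduction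
    (p m k : ℕ) (hp : p.Prime) (hm : 1 ≤ m)
    (F : Type*) [Field F] [Fintype F]
    (hF : Fintype.card F = p ^ m)
    (hk : 0 < k) (hkdvd : k ∣ p ^ m - 1) :
    ((∃ s : ℕ, ∀ a : F, ∃ (x : Fin s → F) (ε : Fin s → F),
        (∀ i, ε i = 1 ∨ ε i = -1) ∧ a = ∑ i, ε i * (x i) ^ k) ↔
      (∃ s : ℕ, ∀ a : F, ∃ x : Fin s → F, a = ∑ i, (x i) ^ k)) ∧
    ((∃ z : F, z ≠ 0 ∧ z ^ k = -1) →
      ∀ s : ℕ,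
        ((∀ a : F, ∃ (x : Fin s → F) (ε : Fin s → F),
            (∀ i, ε i = 1 ∨ ε i = -1) ∧ a = ∑ i, ε i * (x i) ^ k) ↔
          (∀ a : F, ∃ x : Fin s → F, a = ∑ i, (x i) ^ k))) ∧
    (Odd (p ^ m) → (¬ ∃ z : F, z ≠ 0 ∧ z ^ k = -1) →
      ∀ s : ℕ,
        ((∀ a : F, ∃ (x : Fin s → F) (ε : Fin s → F),
            (∀ i, ε i = 1 ∨ ε i = -1) ∧ a = ∑ i, ε i * (x i) ^ k) ↔
          (∀ a : F, ∃ x : Fin s → F, a = ∑ i, (x i) ^ (k / 2)))) := by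
  simp only [← isAdditiveBasis_kthPowers_iff, ← isAdditiveBasis_signedKthPowers_iff,
    ← neg_one_mem_kthPowers_iff hk.ne']
  refine ⟨exists_isAdditiveBasis_union_neg_iff (zero_mem_kthPowers F hk.ne'), ?_, ?_⟩
  · intro hneg s
    rw [signedKthPowers_eq_kthPowers hneg]
  · intro _ hneg s
    rw [signedKthPowers_eq_kthPowers_half (hF ▸ hkdvd) hneg]
end

section
/- Let p be a prime and a, b, c positive integers such that c divides p^a − 1 but c does not divide p^t − 1 for any 1 ≤ t < a, and bc divides p^{ab} − 1 but bc does not divide p^t − 1 for any 1 ≤ t < ab. Let K₁ = GaloisField p a and K₂ = GaloisField p (a·b). Then there exist least natural numbers w₁ and w₂ such that: every element of K₁ is a sum of w₁ terms of the form ±x^{(p^a−1)/c} with x ∈ K₁ and independently chosen signs, and every element of K₂ is a sum of w₂ terms of the form ±x^{(p^{ab}−1)/(bc)} with x ∈ K₂ and independently chosen signs; and moreover w₂ = b·w₁. That is, w((p^{ab}−1)/(bc), p^{ab}) = b·w((p^a−1)/c, p^a). -/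
/-!
Write `q = p ^ a` and let `ζ` be a primitive `bc`-th root of unity in `𝔽_{q ^ b}`. The nonzero
signed `((q ^ b - 1) / (bc))`-th powers are the elements `± ζ ^ n`. As `bc` is a primitive divisor,
`1, ζ, …, ζ ^ (b - 1)` is a basis of `𝔽_{q ^ b}` over `𝔽_q`, and `ζ ^ b` lies in `𝔽_q` because it is
a `c`-th root of unity. Hence the signed powers in `𝔽_{q ^ b}` are exactly the multiples `y ζ ^ i`
of the basis vectors by signed `((q - 1) / c)`-th powers `y` in `𝔽_q`, and a sum of such terms
splits into `b` independent sums, one for each coordinate. A vector all of whose coordinates are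
hardest to represent therefore needs `b` times as many summands as one coordinate. The number `w₁`
exists since `c` is a primitive divisor, so that the `c`-th roots of unity span `𝔽_q` over `𝔽_p`.
-/

open Module Set
open scoped IntermediateField Pointwise

/-- The exact order of `S` as an additive basis of `A`: the least `w` such that every element of `A`
is a sum of `w` elements of `S`. Here `n • S` is the `n`-fold sumset `S + ⋯ + S`, not the dilate
`{n • x | x ∈ S}`. -/
def IsExactBasisOrder {A : Type*} [AddCommMonoid A] (S : Set A) (w : ℕ) : Prop :=
  IsLeast {n : ℕ | n • S = univ} w

section Sumset

variable {A : Type*} [AddCommMonoid A] {S : Set A}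

theorem exists_mem_nsmul_of_mem_closure {x : A} (hx : x ∈ AddSubmonoid.closure S) :
    ∃ n : ℕ, x ∈ n • S := by
  induction hx using AddSubmonoid.closure_induction with
  | mem x hx => exact ⟨1, by rwa [one_nsmul]⟩
  | zero => exact ⟨0, by rw [zero_nsmul]; exact zero_mem_zero⟩
  | add x y _ _ hx hy =>
    obtain ⟨m, hm⟩ := hx
    obtain ⟨n, hn⟩ := hy
    exact ⟨m + n, by rw [add_nsmul]; exact add_mem_add hm hn⟩

theorem exists_isExactBasisOrder_of_closure_eq_top [Finite A] (h0 : 0 ∈ S)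
    (hS : AddSubmonoid.closure S = ⊤) : ∃ w, IsExactBasisOrder S w := by
  have hmem (x : A) : ∃ n : ℕ, x ∈ n • S :=
    exists_mem_nsmul_of_mem_closure (hS ▸ AddSubmonoid.mem_top x)
  choose n hn using hmem
  obtain ⟨N, hN⟩ := (finite_range n).bddAbove
  have hbasis : ∃ m : ℕ, m • S = univ :=
    ⟨N, eq_univ_of_forall fun x ↦ nsmul_subset_nsmul_right h0 (hN (mem_range_self x)) (hn x)⟩
  classical
  exact ⟨Nat.find hbasis, Nat.isLeast_find hbasis⟩

theorem IsExactBasisOrder.exists_forall_mem_nsmul_imp_le {w : ℕ} (h0 : 0 ∈ S)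
    (hw : IsExactBasisOrder S w) : ∃ x : A, ∀ n : ℕ, x ∈ n • S → w ≤ n := by
  rcases w with _ | w
  · exact ⟨0, fun n _ ↦ n.zero_le⟩
  · have hne : w • S ≠ univ := fun h ↦ Nat.not_succ_le_self w (hw.2 h)
    obtain ⟨x, hx⟩ := (ne_univ_iff_exists_notMem _).1 hne
    refine ⟨x, fun n hn ↦ Nat.succ_le_of_lt (lt_of_not_ge fun hnw ↦ hx ?_)⟩
    exact nsmul_subset_nsmul_right h0 hnw hn

end Sumset

theorem addSubmonoidClosure_eq_top_of_span_zmod_eq_top {n : ℕ} {M : Type*} [AddCommGroup M]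
    [Finite M] [Module (ZMod n) M] {S : Set M} (hS : Submodule.span (ZMod n) S = ⊤) :
    AddSubmonoid.closure S = ⊤ := by
  have hspan : Submodule.span (ZMod n) S ≤ (AddSubgroup.closure S).toZModSubmodule n :=
    Submodule.span_le.2 AddSubgroup.subset_closure
  rw [← AddSubgroup.closure_toAddSubmonoid_of_finite, eq_top_iff]
  exact fun x _ ↦ hspan (hS ▸ Submodule.mem_top)

section Coordinates

variable {ι R M : Type*} [Fintype ι] [Semiring R] [AddCommMonoid M] [Module R M]
  (B : Basis ι R M) {S : Set R}

theorem exists_repr_mem_nsmul_of_mem_nsmul_smul_range {s : ℕ} {x : M}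
    (hx : x ∈ s • (S • range B)) :
    ∃ n : ι → ℕ, ∑ i, n i = s ∧ ∀ i, B.repr x i ∈ n i • S := by
  classical
  induction s generalizing x with
  | zero =>
    obtain rfl : x = 0 := by simpa only [zero_nsmul, mem_zero] using hx
    exact ⟨0, by simp, fun i ↦ by simp⟩
  | succ s ih =>
    rw [succ_nsmul] at hx
    obtain ⟨x, hx, _, ⟨y, hy, _, ⟨j, rfl⟩, rfl⟩, rfl⟩ := hx
    obtain ⟨n, rfl, hn⟩ := ih hx
    refine ⟨n + Pi.single j 1, by simp [Finset.sum_add_distrib], fun i ↦ ?_⟩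
    obtain rfl | hij := eq_or_ne i j
    · simpa [succ_nsmul] using add_mem_add (hn i) hy
    · simpa [hij, hij.symm] using hn i

theorem mem_nsmul_smul_range_of_repr_mem_nsmul {n : ι → ℕ} {x : M}
    (hx : ∀ i, B.repr x i ∈ n i • S) : x ∈ (∑ i, n i) • (S • range B) := by
  have hcoord (i : ι) : B.repr x i • B i ∈ n i • (S • range B) := by
    have himage : LinearMap.toSpanSingleton R M (B i) '' S ⊆ S • range B :=
      image_subset_iff.2 fun y hy ↦ smul_mem_smul hy (mem_range_self i)
    apply nsmul_subset_nsmul_left himage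
    rw [← image_nsmul]
    exact mem_image_of_mem _ (hx i)
  rw [← B.sum_repr x, ← Finset.sum_nsmul_assoc]
  exact finsetSum_mem_finsetSum _ _ _ fun i _ ↦ hcoord i

theorem IsExactBasisOrder.smul_range_basis {w : ℕ} (h0 : 0 ∈ S) (hw : IsExactBasisOrder S w) :
    IsExactBasisOrder (S • range B) (Fintype.card ι * w) := by
  constructor
  · refine eq_univ_of_forall fun x ↦ ?_
    have hcoord (i : ι) : B.repr x i ∈ w • S := hw.1 ▸ mem_univ _
    simpa using mem_nsmul_smul_range_of_repr_mem_nsmul B hcoord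
  · intro s hs
    obtain ⟨y, hy⟩ := hw.exists_forall_mem_nsmul_imp_le h0
    obtain ⟨n, rfl, hn⟩ := exists_repr_mem_nsmul_of_mem_nsmul_smul_range B (S := S)
      (x := B.equivFun.symm fun _ ↦ y) (hs ▸ mem_univ _)
    have hle (i : ι) : w ≤ n i := hy _ (by simpa using hn i)
    simpa using Finset.card_nsmul_le_sum Finset.univ n w fun i _ ↦ hle i

end Coordinates

theorem exists_basis_eq_pow_of_adjoin_eq_top {K L : Type*} [Field K] [CommRing L] [Algebra K L]
    [FiniteDimensional K L] {x : L} (hx : Algebra.adjoin K {x} = ⊤) :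
    ∃ B : Basis (Fin (finrank K L)) K L, ⇑B = fun i : Fin (finrank K L) ↦ x ^ (i : ℕ) := by
  let pb := PowerBasis.ofAdjoinEqTop (.of_finite K x) hx
  have hgen : pb.gen = x := PowerBasis.ofAdjoinEqTop_gen _ hx
  refine ⟨pb.basis.reindex (finCongr pb.finrank.symm), funext fun i ↦ ?_⟩
  simp [hgen]

/-- `d` is a primitive divisor of `q ^ n - 1`; for `n > 0` this says that `q` has multiplicative
order exactly `n` modulo `d`. The subtraction is truncated, which matters only for `q = 0`. -/
def IsPrimitiveDivisor (d q n : ℕ) : Prop :=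
  d ∣ q ^ n - 1 ∧ ∀ t : ℕ, 1 ≤ t → t < n → ¬ d ∣ q ^ t - 1

theorem IsPrimitiveDivisor.of_mul {d q m n : ℕ} (hm : 0 < m)
    (hd : IsPrimitiveDivisor d q (m * n)) : IsPrimitiveDivisor d (q ^ m) n := by
  refine ⟨by simpa only [pow_mul] using hd.1, fun t ht htn ↦ ?_⟩
  rw [← pow_mul]
  exact hd.2 (m * t) (Nat.mul_pos hm ht) (Nat.mul_lt_mul_of_pos_left htn hm)

/-- The elements `± y ^ k`, the summands allowed in the weak Waring problem for exponent `k`. -/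
def signedPowers (R : Type*) [Ring R] (k : ℕ) : Set R :=
  {z | ∃ y ε : R, (ε = 1 ∨ ε = -1) ∧ ε * y ^ k = z}

/-- Zero together with the elements `± u` for `u` a `d`-th root of unity: in a finite field of
cardinality `q` with `d ∣ q - 1`, another description of the signed `((q - 1) / d)`-th powers. -/
def signedRoots (R : Type*) [Ring R] (d : ℕ) : Set R :=
  {z | z = 0 ∨ z ^ d = 1 ∨ (-z) ^ d = 1}

theorem isExactBasisOrder_signedPowers_iff {R : Type*} [Ring R] {k w : ℕ} :
    IsExactBasisOrder (signedPowers R k) w ↔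
      IsLeast {s : ℕ | ∀ x : R, ∃ (y : Fin s → R) (ε : Fin s → R),
        (∀ i, ε i = 1 ∨ ε i = -1) ∧ x = ∑ i, ε i * y i ^ k} w := by
  suffices hset : {s : ℕ | s • signedPowers R k = univ} = {s : ℕ | ∀ x : R,
      ∃ (y : Fin s → R) (ε : Fin s → R),
        (∀ i, ε i = 1 ∨ ε i = -1) ∧ x = ∑ i, ε i * y i ^ k} by
    rw [IsExactBasisOrder, hset]
  ext s
  simp only [mem_ofPred_eq, eq_univ_iff_forall, mem_nsmul_iff_sum]
  refine forall_congr' fun x ↦ ⟨?_, ?_⟩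
  · rintro ⟨f, hf, rfl⟩
    choose y ε hε hf using hf
    exact ⟨y, ε, hε, by simp only [hf]⟩
  · rintro ⟨y, ε, hε, rfl⟩
    exact ⟨_, fun i ↦ ⟨y i, ε i, hε i, rfl⟩, rfl⟩

section RootsOfUnity

variable {K L : Type*} [CommRing K] [CommRing L] [Algebra K L] {b c : ℕ} {η : K} {ζ : L}

theorem smul_pow_pow_mul_eq_one (hζ : ζ ^ (b * c) = 1) {v : K} (hv : v ^ c = 1) (i : ℕ) :
    (v • ζ ^ i) ^ (b * c) = 1 := by
  rw [smul_pow, pow_right_comm, hζ, one_pow, mul_comm b c, pow_mul, hv, one_pow, one_smul]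

variable [IsDomain L] [FaithfulSMul K L] [NeZero b] [NeZero c]

theorem exists_smul_pow_eq_of_pow_mul_eq_one (hη : IsPrimitiveRoot η c)
    (hζ : IsPrimitiveRoot ζ (b * c)) {u : L} (hu : u ^ (b * c) = 1) :
    ∃ v : K, v ^ c = 1 ∧ ∃ i : Fin b, v • ζ ^ (i : ℕ) = u := by
  obtain ⟨n, -, rfl⟩ := hζ.eq_pow_of_pow_eq_one hu
  have hη' : IsPrimitiveRoot (algebraMap K L η) c :=
    hη.map_of_injective (FaithfulSMul.algebraMap_injective K L)
  obtain ⟨m, -, hm⟩ := hη'.eq_pow_of_pow_eq_one (ξ := ζ ^ b) (by rw [← pow_mul, hζ.pow_eq_one])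
  refine ⟨(η ^ m) ^ (n / b), ?_, ⟨n % b, Nat.mod_lt n (NeZero.pos b)⟩, ?_⟩
  · rw [pow_right_comm, pow_right_comm η, hη.pow_eq_one, one_pow, one_pow]
  · rw [Algebra.smul_def, map_pow, map_pow, hm, ← pow_mul, ← pow_add, Nat.div_add_mod]

theorem signedRoots_mul (hη : IsPrimitiveRoot η c) (hζ : IsPrimitiveRoot ζ (b * c)) :
    signedRoots L (b * c) = signedRoots K c • range fun i : Fin b ↦ ζ ^ (i : ℕ) := by
  ext z
  constructor
  · rintro (rfl | hz | hz)
    · exact ⟨0, .inl rfl, ζ ^ 0, ⟨0, rfl⟩, zero_smul K _⟩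
    · obtain ⟨v, hv, i, rfl⟩ := exists_smul_pow_eq_of_pow_mul_eq_one hη hζ hz
      exact smul_mem_smul (.inr (.inl hv)) (mem_range_self i)
    · obtain ⟨v, hv, i, hi⟩ := exists_smul_pow_eq_of_pow_mul_eq_one hη hζ hz
      refine ⟨-v, .inr (.inr (by rwa [neg_neg])), _, mem_range_self i, ?_⟩
      simp only [neg_smul, hi, neg_neg]
  · rintro ⟨v, hv, _, ⟨i, rfl⟩, rfl⟩
    rcases hv with rfl | hv | hv
    · exact .inl (zero_smul K _)
    · exact .inr (.inl (smul_pow_pow_mul_eq_one hζ.pow_eq_one hv i))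
    · refine .inr (.inr ?_)
      rw [← neg_smul]
      exact smul_pow_pow_mul_eq_one hζ.pow_eq_one hv i

end RootsOfUnity

section FiniteField

theorem natCard_sub_one_pos (α : Type*) [Finite α] [Nontrivial α] : 0 < Nat.card α - 1 :=
  Nat.sub_pos_of_lt Finite.one_lt_card

variable {K : Type*} [Field K] [Finite K]

theorem pow_natCard_sub_one_eq_one {y : K} (hy : y ≠ 0) : y ^ (Nat.card K - 1) = 1 := by
  have := Fintype.ofFinite K
  rw [Nat.card_eq_fintype_card]
  exact FiniteField.pow_card_sub_one_eq_one y hy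

theorem exists_isPrimitiveRoot_natCard_sub_one :
    ∃ g : K, IsPrimitiveRoot g (Nat.card K - 1) := by
  obtain ⟨g, hg⟩ := IsCyclic.exists_ofOrder_eq_natCard (α := Kˣ)
  rw [Nat.card_units] at hg
  exact ⟨g, IsPrimitiveRoot.coe_units_iff.2 (hg ▸ IsPrimitiveRoot.orderOf g)⟩

theorem exists_isPrimitiveRoot_of_dvd_natCard_sub_one {d : ℕ} (hd : d ∣ Nat.card K - 1) :
    ∃ ζ : K, IsPrimitiveRoot ζ d := by
  obtain ⟨g, hg⟩ := exists_isPrimitiveRoot_natCard_sub_one (K := K)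
  exact ⟨_, hg.pow (natCard_sub_one_pos K) (Nat.div_mul_cancel hd).symm⟩

theorem pow_eq_one_iff_exists_pow_eq {d : ℕ} (hd : d ∣ Nat.card K - 1) {z : K} :
    z ^ d = 1 ↔ ∃ y ≠ 0, y ^ ((Nat.card K - 1) / d) = z := by
  constructor
  · intro hz
    obtain ⟨g, hg⟩ := exists_isPrimitiveRoot_natCard_sub_one (K := K)
    have : NeZero d := ⟨ne_zero_of_dvd_ne_zero (natCard_sub_one_pos K).ne' hd⟩
    have hgd := hg.pow (natCard_sub_one_pos K) (Nat.div_mul_cancel hd).symm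
    obtain ⟨i, -, rfl⟩ := hgd.eq_pow_of_pow_eq_one hz
    exact ⟨g ^ i, pow_ne_zero i (hg.ne_zero (natCard_sub_one_pos K).ne'), pow_right_comm g _ _⟩
  · rintro ⟨y, hy, rfl⟩
    rw [← pow_mul, Nat.div_mul_cancel hd, pow_natCard_sub_one_eq_one hy]

theorem signedPowers_eq_signedRoots {d : ℕ} (hd : d ∣ Nat.card K - 1) :
    signedPowers K ((Nat.card K - 1) / d) = signedRoots K d := by
  have hexp : (Nat.card K - 1) / d ≠ 0 :=
    (Nat.div_pos (Nat.le_of_dvd (natCard_sub_one_pos K) hd)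
      (Nat.pos_of_dvd_of_pos hd (natCard_sub_one_pos K))).ne'
  ext z
  constructor
  · rintro ⟨y, ε, hε, rfl⟩
    obtain rfl | hy := eq_or_ne y 0
    · exact .inl (by rw [zero_pow hexp, mul_zero])
    · have hroot := (pow_eq_one_iff_exists_pow_eq hd).2 ⟨y, hy, rfl⟩
      rcases hε with rfl | rfl
      · exact .inr (.inl (by rwa [one_mul]))
      · exact .inr (.inr (by rwa [neg_one_mul, neg_neg]))
  · rintro (rfl | hz | hz)
    · exact ⟨0, 1, .inl rfl, by rw [zero_pow hexp, mul_zero]⟩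
    · obtain ⟨y, -, rfl⟩ := (pow_eq_one_iff_exists_pow_eq hd).1 hz
      exact ⟨y, 1, .inl rfl, one_mul _⟩
    · obtain ⟨y, -, hy⟩ := (pow_eq_one_iff_exists_pow_eq hd).1 hz
      exact ⟨y, -1, .inr rfl, by rw [hy, neg_one_mul, neg_neg]⟩

theorem adjoin_eq_top_of_isPrimitiveDivisor {F : Type*} [Field F] [Algebra F K] {d : ℕ} {ζ : K}
    (hζ : IsPrimitiveRoot ζ d) (hd : IsPrimitiveDivisor d (Nat.card F) (finrank F K)) :
    Algebra.adjoin F {ζ} = ⊤ := by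
  have := Finite.of_injective _ (algebraMap F K).injective
  have hd0 : d ≠ 0 := by
    have hdvd := hd.1
    rw [← natCard_eq_pow_finrank] at hdvd
    exact ne_zero_of_dvd_ne_zero (natCard_sub_one_pos K).ne' hdvd
  have hdvd : d ∣ Nat.card F ^ finrank F F⟮ζ⟯ - 1 := by
    rw [← natCard_eq_pow_finrank]
    have hgen : IsPrimitiveRoot (IntermediateField.AdjoinSimple.gen F ζ) d :=
      .of_map_of_injective (f := algebraMap F⟮ζ⟯ K) (by simpa using hζ)
        (algebraMap F⟮ζ⟯ K).injective
    exact hgen.dvd_of_pow_eq_one _ (pow_natCard_sub_one_eq_one (hgen.ne_zero hd0))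
  have hle : finrank F F⟮ζ⟯ ≤ finrank F K := Submodule.finrank_le F⟮ζ⟯.toSubmodule
  have hfinrank : finrank F F⟮ζ⟯ = finrank F K :=
    hle.eq_of_not_lt fun hlt ↦ hd.2 _ finrank_pos hlt hdvd
  rw [← IntermediateField.adjoin_simple_eq_top_iff_of_isAlgebraic (.of_finite F ζ)]
  exact IntermediateField.eq_of_le_of_finrank_eq le_top
    (hfinrank.trans IntermediateField.finrank_top'.symm)

end FiniteField

theorem exists_isExactBasisOrder_signedPowers {p : ℕ} [Fact p.Prime] {K : Type*} [Field K]
    [Finite K] [Algebra (ZMod p) K] {c : ℕ} (hc : IsPrimitiveDivisor c p (finrank (ZMod p) K)) :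
    ∃ w, IsExactBasisOrder (signedPowers K ((Nat.card K - 1) / c)) w := by
  have hdvd : c ∣ Nat.card K - 1 := FiniteField.pow_finrank_eq_natCard p K ▸ hc.1
  obtain ⟨η, hη⟩ := exists_isPrimitiveRoot_of_dvd_natCard_sub_one hdvd
  have hadjoin : Algebra.adjoin (ZMod p) {η} = ⊤ :=
    adjoin_eq_top_of_isPrimitiveDivisor hη (by rwa [Nat.card_zmod])
  have hpow : (Submonoid.closure {η} : Set K) ⊆ signedRoots K c := by
    intro x hx
    obtain ⟨m, rfl⟩ := Submonoid.mem_closure_singleton.1 hx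
    exact .inr (.inl (by rw [pow_right_comm, hη.pow_eq_one, one_pow]))
  have hspan : Submodule.span (ZMod p) (signedRoots K c) = ⊤ := by
    rw [eq_top_iff, ← Algebra.top_toSubmodule, ← hadjoin, Algebra.adjoin_eq_span]
    exact Submodule.span_mono hpow
  rw [signedPowers_eq_signedRoots hdvd]
  exact exists_isExactBasisOrder_of_closure_eq_top (.inl rfl)
    (addSubmonoidClosure_eq_top_of_span_zmod_eq_top hspan)

theorem IsExactBasisOrder.signedPowers_extension {K L : Type*} [Field K] [Field L] [Finite L]
    [Algebra K L] {c w : ℕ} (hc : c ∣ Nat.card K - 1)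
    (hbc : IsPrimitiveDivisor (finrank K L * c) (Nat.card K) (finrank K L))
    (hw : IsExactBasisOrder (signedPowers K ((Nat.card K - 1) / c)) w) :
    IsExactBasisOrder (signedPowers L ((Nat.card L - 1) / (finrank K L * c)))
      (finrank K L * w) := by
  have : Finite K := .of_injective _ (algebraMap K L).injective
  have hdvd : finrank K L * c ∣ Nat.card L - 1 := natCard_eq_pow_finrank (K := K) (V := L) ▸ hbc.1
  have : NeZero (finrank K L) := ⟨finrank_pos.ne'⟩
  have : NeZero c := ⟨ne_zero_of_dvd_ne_zero (natCard_sub_one_pos K).ne' hc⟩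
  obtain ⟨η, hη⟩ := exists_isPrimitiveRoot_of_dvd_natCard_sub_one hc
  obtain ⟨ζ, hζ⟩ := exists_isPrimitiveRoot_of_dvd_natCard_sub_one hdvd
  obtain ⟨B, hB⟩ := exists_basis_eq_pow_of_adjoin_eq_top
    (adjoin_eq_top_of_isPrimitiveDivisor hζ hbc)
  rw [signedPowers_eq_signedRoots hc] at hw
  rw [signedPowers_eq_signedRoots hdvd, signedRoots_mul hη hζ, ← hB]
  simpa only [Fintype.card_fin] using hw.smul_range_basis B (.inl rfl)

theorem exists_algebra_galoisField_finrank_eq (p : ℕ) [Fact p.Prime] {a b : ℕ} (ha : 0 < a)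
    (hb : 0 < b) : ∃ _ : Algebra (GaloisField p a) (GaloisField p (a * b)),
      finrank (GaloisField p a) (GaloisField p (a * b)) = b := by
  have hK := GaloisField.finrank p ha.ne'
  have hL := GaloisField.finrank p (Nat.mul_pos ha hb).ne'
  obtain ⟨f⟩ := FiniteField.nonempty_algHom_of_finrank_dvd (F := ZMod p) (K := GaloisField p a)
    (L := GaloisField p (a * b)) (by rw [hK, hL]; exact dvd_mul_right a b)
  let := f.toRingHom.toAlgebra
  have : IsScalarTower (ZMod p) (GaloisField p a) (GaloisField p (a * b)) :=
    .of_algebraMap_eq fun x ↦ (f.commutes x).symm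
  have htower := finrank_mul_finrank (ZMod p) (GaloisField p a) (GaloisField p (a * b))
  rw [hK, hL] at htower
  exact ⟨_, Nat.eq_of_mul_eq_mul_left ha htower⟩

theorem weak_waring_reduction_formula
    (p : ℕ) [Fact p.Prime] (a b c : ℕ)
    (ha : 0 < a) (hb : 0 < b) (hc : 0 < c)
    (hc1 : c ∣ p ^ a - 1)
    (hc2 : ∀ t : ℕ, 1 ≤ t → t < a → ¬ c ∣ p ^ t - 1)
    (hbc1 : b * c ∣ p ^ (a * b) - 1)
    (hbc2 : ∀ t : ℕ, 1 ≤ t → t < a * b → ¬ (b * c) ∣ p ^ t - 1) :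
    ∃ w₁ w₂ : ℕ,
      IsLeast {s : ℕ | ∀ x : GaloisField p a,
        ∃ (y : Fin s → GaloisField p a) (ε : Fin s → GaloisField p a),
          (∀ i, ε i = 1 ∨ ε i = -1) ∧
          x = ∑ i, ε i * (y i) ^ ((p ^ a - 1) / c)} w₁ ∧
      IsLeast {s : ℕ | ∀ x : GaloisField p (a * b),
        ∃ (y : Fin s → GaloisField p (a * b)) (ε : Fin s → GaloisField p (a * b)),
          (∀ i, ε i = 1 ∨ ε i = -1) ∧
          x = ∑ i, ε i * (y i) ^ ((p ^ (a * b) - 1) / (b * c))} w₂ ∧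
      w₂ = b * w₁ := by
  obtain ⟨_, hfinrank⟩ := exists_algebra_galoisField_finrank_eq p ha hb
  have hcardK : Nat.card (GaloisField p a) = p ^ a := GaloisField.card p a ha.ne'
  have hcardL : Nat.card (GaloisField p (a * b)) = p ^ (a * b) :=
    GaloisField.card p (a * b) (Nat.mul_pos ha hb).ne'
  have hprim : IsPrimitiveDivisor (b * c) (p ^ a) b := .of_mul ha ⟨hbc1, hbc2⟩
  obtain ⟨w, hw⟩ := exists_isExactBasisOrder_signedPowers (p := p) (K := GaloisField p a) (c := c)
    (by rw [GaloisField.finrank p ha.ne']; exact ⟨hc1, hc2⟩)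
  have hbw := hw.signedPowers_extension (L := GaloisField p (a * b))
    (by rwa [hcardK]) (by rwa [hcardK, hfinrank])
  rw [hcardK] at hw
  rw [hcardL, hfinrank] at hbw
  exact ⟨w, b * w, isExactBasisOrder_signedPowers_iff.1 hw,
    isExactBasisOrder_signedPowers_iff.1 hbw, rfl⟩
end
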